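/- Global double robustness of the one-step relative error estimator (Theorem 2(d)): if either ẽ(X) = e(X) almost surely, or both μ̃₀(X) = μ₀(X) and μ̃₁(X) = μ₁(X) almost surely, then for any bounded measurable τ̂₁, τ̂₂ : 𝒳 → ℝ, E[τ̂₁(X)² − τ̂₂(X)² − 2(τ̂₁(X) − τ̂₂(X))·Γ̃] = δ(τ̂₁, τ̂₂); that is, the one-step relative error estimator is unbiased even if the other nuisance estimator is arbitrary (possibly inconsistent). -/

import Mathlib

open MeasureTheory ProbabilityTheory

def BMeas {α : Type*} [MeasurableSpace α] (f : α → ℝ) : Prop :=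
  Measurable f ∧ ∃ C : ℝ, ∀ x, |f x| ≤ C

lemma BMeas.add {α : Type*} [MeasurableSpace α] {f g : α → ℝ} (hf : BMeas f) (hg : BMeas g) :
    BMeas (fun x => f x + g x) := by
  obtain ⟨hf, C, hC⟩ := hf
  obtain ⟨hg, D, hD⟩ := hg
  exact ⟨hf.add hg, C + D, fun x => (abs_add_le _ _).trans (add_le_add (hC x) (hD x))⟩

lemma BMeas.sub {α : Type*} [MeasurableSpace α] {f g : α → ℝ} (hf : BMeas f) (hg : BMeas g) :
    BMeas (fun x => f x - g x) := by
  obtain ⟨hf, C, hC⟩ := hf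
  obtain ⟨hg, D, hD⟩ := hg
  exact ⟨hf.sub hg, C + D, fun x => (abs_sub _ _).trans (add_le_add (hC x) (hD x))⟩

lemma BMeas.mul {α : Type*} [MeasurableSpace α] {f g : α → ℝ} (hf : BMeas f) (hg : BMeas g) :
    BMeas (fun x => f x * g x) := by
  obtain ⟨hf, C, hC⟩ := hf
  obtain ⟨hg, D, hD⟩ := hg
  refine ⟨hf.mul hg, C * D, fun x => ?_⟩
  rw [abs_mul]
  exact mul_le_mul (hC x) (hD x) (abs_nonneg _) ((abs_nonneg _).trans (hC x))

lemma BMeas.const {α : Type*} [MeasurableSpace α] (c : ℝ) : BMeas (fun _ : α => c) :=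
  ⟨measurable_const, |c|, fun _ => le_rfl⟩

lemma BMeas.inv {α : Type*} [MeasurableSpace α] {f : α → ℝ} (hf : Measurable f) {c : ℝ}
    (hc : 0 < c) (h : ∀ x, c ≤ f x) : BMeas (fun x => (f x)⁻¹) := by
  refine ⟨hf.inv, c⁻¹, fun x => ?_⟩
  rw [abs_of_pos (inv_pos.2 (hc.trans_le (h x)))]
  exact inv_anti₀ hc (h x)

lemma BMeas.integrable {Ω α : Type*} [MeasurableSpace Ω] [MeasurableSpace α] {P : Measure Ω}
    [IsProbabilityMeasure P] {X : Ω → α} (hX : Measurable X) {f : α → ℝ} (hf : BMeas f) :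
    Integrable (fun ω => f (X ω)) P := by
  obtain ⟨hf, C, hC⟩ := hf
  exact Integrable.of_bound (hf.comp hX).aestronglyMeasurable C
    (Filter.Eventually.of_forall fun ω => hC (X ω))

lemma BMeas.integrable_mul {Ω α : Type*} [MeasurableSpace Ω] [MeasurableSpace α] {P : Measure Ω}
    {X : Ω → α} (hX : Measurable X) {f : α → ℝ} (hf : BMeas f)
    {Z : Ω → ℝ} (hZ : Integrable Z P) :
    Integrable (fun ω => f (X ω) * Z ω) P := by
  obtain ⟨hf, C, hC⟩ := hf
  exact hZ.bdd_mul (hf.comp hX).aestronglyMeasurable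
    (Filter.Eventually.of_forall fun ω => hC (X ω))

lemma BMeas.integral_mul {Ω α : Type*} [MeasurableSpace Ω] [mα : MeasurableSpace α]
    {P : Measure Ω} [IsProbabilityMeasure P]
    {X : Ω → α} (hX : Measurable X) {f h : α → ℝ} (hf : BMeas f)
    {Z : Ω → ℝ} (hZ : Integrable Z P)
    (hc : P[Z | mα.comap X] =ᵐ[P] fun ω => h (X ω)) :
    ∫ ω, f (X ω) * Z ω ∂P = ∫ ω, f (X ω) * h (X ω) ∂P := by
  have hm : mα.comap X ≤ (inferInstance : MeasurableSpace Ω) := hX.comap_le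
  have hfm : StronglyMeasurable[mα.comap X] (fun ω => f (X ω)) :=
    (hf.1.comp (comap_measurable X)).stronglyMeasurable
  have h1 := condExp_mul_of_stronglyMeasurable_left hfm (hf.integrable_mul hX hZ) hZ
  rw [← integral_condExp hm]
  refine integral_congr_ae ?_
  filter_upwards [h1, hc] with ω h1 h2
  have h3 : (P[fun ω => f (X ω) * Z ω | mα.comap X]) ω = f (X ω) * (P[Z | mα.comap X]) ω := h1
  rw [h3, h2]

/-- Global double robustness of the one-step relative error estimator: if either
`ẽ(X) = e(X)` a.s., or both `μ̃₀(X) = μ₀(X)` and `μ̃₁(X) = μ₁(X)` a.s., then the one-step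
relative error estimand `E[τ̂₁(X)² − τ̂₂(X)² − 2(τ̂₁(X) − τ̂₂(X))·Γ̃]` equals
`δ(τ̂₁, τ̂₂) = φ(τ̂₁) − φ(τ̂₂)`, even if the other nuisance estimator is arbitrary. -/
theorem relative_error_globally_doubly_robust
    {Ω 𝒳 : Type*} [MeasurableSpace Ω] [m𝒳 : MeasurableSpace 𝒳]
    (P : Measure Ω) [IsProbabilityMeasure P]
    (X : Ω → 𝒳) (W Y : Ω → ℝ)
    (hX : Measurable X) (hW : Measurable W) (hY : Measurable Y)
    (hW01 : ∀ᵐ ω ∂P, W ω = 0 ∨ W ω = 1)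
    (M : ℝ) (hM : 0 < M) (hYb : ∀ᵐ ω ∂P, |Y ω| ≤ M)
    (e μ₀ μ₁ : 𝒳 → ℝ)
    (he : Measurable e) (hμ₀ : Measurable μ₀) (hμ₁ : Measurable μ₁)
    (C₀ C₁ : ℝ) (hμ₀b : ∀ x, |μ₀ x| ≤ C₀) (hμ₁b : ∀ x, |μ₁ x| ≤ C₁)
    (η : ℝ) (hη₀ : 0 < η) (hη₁ : η < 1/2)
    (heb : ∀ x, η ≤ e x ∧ e x ≤ 1 - η)
    (hce : P[W | m𝒳.comap X] =ᵐ[P] fun ω => e (X ω))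
    (hc1 : P[fun ω => W ω * Y ω | m𝒳.comap X] =ᵐ[P] fun ω => e (X ω) * μ₁ (X ω))
    (hc0 : P[fun ω => (1 - W ω) * Y ω | m𝒳.comap X]
        =ᵐ[P] fun ω => (1 - e (X ω)) * μ₀ (X ω))
    (μt₀ μt₁ et : 𝒳 → ℝ)
    (hμt₀ : Measurable μt₀) (hμt₁ : Measurable μt₁) (het : Measurable et)
    (Ct₀ Ct₁ : ℝ) (hμt₀b : ∀ x, |μt₀ x| ≤ Ct₀) (hμt₁b : ∀ x, |μt₁ x| ≤ Ct₁)
    (η' : ℝ) (hη'₀ : 0 < η') (hη'₁ : η' < 1/2)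
    (hetb : ∀ x, η' ≤ et x ∧ et x ≤ 1 - η')
    (hdr : (∀ᵐ ω ∂P, et (X ω) = e (X ω))
        ∨ ((∀ᵐ ω ∂P, μt₀ (X ω) = μ₀ (X ω)) ∧ (∀ᵐ ω ∂P, μt₁ (X ω) = μ₁ (X ω)))) :
    ∀ (τhat₁ τhat₂ : 𝒳 → ℝ) (B₁ B₂ : ℝ), Measurable τhat₁ → Measurable τhat₂ →
      (∀ x, |τhat₁ x| ≤ B₁) → (∀ x, |τhat₂ x| ≤ B₂) →
      ∫ ω, (τhat₁ (X ω) ^ 2 - τhat₂ (X ω) ^ 2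
          - 2 * (τhat₁ (X ω) - τhat₂ (X ω))
            * (W ω * (Y ω - μt₁ (X ω)) / et (X ω) + μt₁ (X ω)
              - (1 - W ω) * (Y ω - μt₀ (X ω)) / (1 - et (X ω)) - μt₀ (X ω))) ∂P
        = (∫ ω, (τhat₁ (X ω) - (μ₁ (X ω) - μ₀ (X ω))) ^ 2 ∂P)
          - ∫ ω, (τhat₂ (X ω) - (μ₁ (X ω) - μ₀ (X ω))) ^ 2 ∂P := by
  intro t₁ t₂ B₁ B₂ ht₁ ht₂ hB₁ hB₂
  have b1 : BMeas t₁ := ⟨ht₁, B₁, hB₁⟩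
  have b2 : BMeas t₂ := ⟨ht₂, B₂, hB₂⟩
  have bm0 : BMeas μ₀ := ⟨hμ₀, C₀, hμ₀b⟩
  have bm1 : BMeas μ₁ := ⟨hμ₁, C₁, hμ₁b⟩
  have bn0 : BMeas μt₀ := ⟨hμt₀, Ct₀, hμt₀b⟩
  have bn1 : BMeas μt₁ := ⟨hμt₁, Ct₁, hμt₁b⟩
  have be : BMeas e := ⟨he, 1, fun x => abs_le.2 ⟨by linarith [heb x], by linarith [heb x]⟩⟩
  have bi : BMeas (fun x => (et x)⁻¹) := BMeas.inv het hη'₀ fun x => (hetb x).1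
  have bj : BMeas (fun x => (1 - et x)⁻¹) :=
    BMeas.inv (measurable_const.sub het) hη'₀ fun x => by linarith [hetb x]
  have bd : BMeas (fun x => 2 * (t₁ x - t₂ x)) := (BMeas.const 2).mul (b1.sub b2)
  have bg1 : BMeas (fun x => -1 * (2 * (t₁ x - t₂ x) * (et x)⁻¹)) :=
    (BMeas.const (-1)).mul (bd.mul bi)
  have bg0 : BMeas (fun x => 2 * (t₁ x - t₂ x) * (1 - et x)⁻¹) := bd.mul bj
  have bgW : BMeas (fun x => 2 * (t₁ x - t₂ x) * (μt₁ x * (et x)⁻¹ + μt₀ x * (1 - et x)⁻¹)) :=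
    bd.mul ((bn1.mul bi).add (bn0.mul bj))
  have bA : BMeas (fun x => (t₁ x * t₁ x - t₂ x * t₂ x)
      - 2 * (t₁ x - t₂ x) * ((μt₁ x - μt₀ x) + μt₀ x * (1 - et x)⁻¹)) :=
    ((b1.mul b1).sub (b2.mul b2)).sub (bd.mul ((bn1.sub bn0).add (bn0.mul bj)))
  have iW : Integrable W P := by
    refine Integrable.of_bound hW.aestronglyMeasurable 1 ?_
    filter_upwards [hW01] with ω h
    rcases h with h | h <;> simp [h]
  have iWY : Integrable (fun ω => W ω * Y ω) P := by
    refine Integrable.of_bound (hW.mul hY).aestronglyMeasurable M ?_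
    filter_upwards [hW01, hYb] with ω h hy
    rcases h with h | h <;> simp [h, hy, hM.le]
  have iVY : Integrable (fun ω => (1 - W ω) * Y ω) P := by
    refine Integrable.of_bound ((measurable_const.sub hW).mul hY).aestronglyMeasurable M ?_
    filter_upwards [hW01, hYb] with ω h hy
    rcases h with h | h <;> simp [h, hy, hM.le]
  have e1 := bg1.integral_mul hX (h := fun x => e x * μ₁ x) iWY hc1
  have e0 := bg0.integral_mul hX (h := fun x => (1 - e x) * μ₀ x) iVY hc0
  have eW := bgW.integral_mul hX (h := e) iW hce
  have j1 := bg1.integrable_mul hX iWY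
  have j0 := bg0.integrable_mul hX iVY
  have jW := bgW.integrable_mul hX iW
  have jA := bA.integrable (P := P) hX
  have k1 := (bg1.mul (be.mul bm1)).integrable (P := P) hX
  have k0 := (bg0.mul (((BMeas.const 1).sub be).mul bm0)).integrable (P := P) hX
  have kW := (bgW.mul be).integrable (P := P) hX
  have r1 : Integrable (fun ω => (t₁ (X ω) - (μ₁ (X ω) - μ₀ (X ω))) ^ 2) P := by
    simpa only [sq] using
      ((b1.sub (bm1.sub bm0)).mul (b1.sub (bm1.sub bm0))).integrable (P := P) hX
  have r2 : Integrable (fun ω => (t₂ (X ω) - (μ₁ (X ω) - μ₀ (X ω))) ^ 2) P := by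
    simpa only [sq] using
      ((b2.sub (bm1.sub bm0)).mul (b2.sub (bm1.sub bm0))).integrable (P := P) hX
  rw [← integral_sub r1 r2]
  have L := integral_add (jA.add j1) (j0.add jW)
  have L1 := integral_add jA j1
  have L0 := integral_add j0 jW
  have R := integral_add (jA.add k1) (k0.add kW)
  have R1 := integral_add jA k1
  have R0 := integral_add k0 kW
  simp only [Pi.add_apply] at L L1 L0 R R1 R0
  rw [L1, L0, e1, e0, eW, ← R1, ← R0, ← R] at L
  refine Eq.trans (integral_congr_ae (Filter.Eventually.of_forall fun ω => ?_))
    (L.trans (integral_congr_ae ?_))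
  · simp only [div_eq_mul_inv]
    ring
  · rcases hdr with h | ⟨h0, h1⟩
    · filter_upwards [h] with ω h
      have p1 : e (X ω) ≠ 0 := by
        have : 0 < e (X ω) := by linarith [heb (X ω)]
        exact this.ne'
      have p0 : 1 - e (X ω) ≠ 0 := by
        have : 0 < 1 - e (X ω) := by linarith [heb (X ω)]
        exact this.ne'
      rw [h]
      field_simp
      ring
    · filter_upwards [h0, h1] with ω h0 h1
      have p1 : et (X ω) ≠ 0 := by
        have : 0 < et (X ω) := by linarith [hetb (X ω)]
        exact this.ne'
      have p0 : 1 - et (X ω) ≠ 0 := by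
        have : 0 < 1 - et (X ω) := by linarith [hetb (X ω)]
        exact this.ne'
      rw [h0, h1]
      field_simp
      ring
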